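/- If λ ∈ (𝔱^k)^* is a regular value of μ, then the image of the projection π_λ : μ^{-1}(λ) → ℂ^n, (z,w) ↦ z, is exactly the set (ℂ^n)^{lf} of points z ∈ ℂ^n whose stabilizer in T^k is finite; moreover, for every z in this image, the fiber {w ∈ ℂ^n : μ(z,w) = λ} is an affine subspace of ℂ^n (a coset of a linear subspace) of dimension d. -/

import Mathlib

open scoped BigOperators

noncomputable section

/-- The subgroup `T^k ⊆ (ℂ^×)^n` cut out by the integer matrix `A`. -/
def Tk {d n : ℕ} (A : Matrix (Fin d) (Fin n) ℤ) : Set (Fin n → ℂˣ) :=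
  {t | ∀ j : Fin d, ∏ i : Fin n, (t i) ^ (A j i) = 1}

/-- `𝔱^k = ker (A : ℂ^n → ℂ^d)`. -/
def tkLie {d n : ℕ} (A : Matrix (Fin d) (Fin n) ℤ) : Submodule ℂ (Fin n → ℂ) :=
  LinearMap.ker (Matrix.mulVecLin (A.map (Int.cast : ℤ → ℂ)))

/-- The linear functional `x ↦ Σ_i z_i w_i x_i` on `𝔱^k`. -/
def muL {d n : ℕ} (A : Matrix (Fin d) (Fin n) ℤ) (z w : Fin n → ℂ) :
    Module.Dual ℂ (tkLie A) :=
  ∑ i : Fin n, (z i * w i) •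
    ((LinearMap.proj (R := ℂ) (φ := fun _ : Fin n => ℂ) i).comp (tkLie A).subtype)

/-- The moment map `μ : ℂ^n × ℂ^n → (𝔱^k)^*`, `μ(z,w)(x) = Σ_i z_i w_i x_i`, with values in
the (continuous) dual of `𝔱^k`. -/
def muMap {d n : ℕ} (A : Matrix (Fin d) (Fin n) ℤ) :
    (Fin n → ℂ) × (Fin n → ℂ) → (tkLie A →L[ℂ] ℂ) :=
  fun p => LinearMap.toContinuousLinearMap (muL A p.1 p.2)

/-- `λ` is a regular value of `μ` if the derivative of `μ` is surjective at every point of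
`μ⁻¹(λ)`. -/
def IsRegularValue {d n : ℕ} (A : Matrix (Fin d) (Fin n) ℤ) (lam : tkLie A →L[ℂ] ℂ) : Prop :=
  ∀ p : (Fin n → ℂ) × (Fin n → ℂ), muMap A p = lam →
    Function.Surjective (fderiv ℂ (muMap A) p)

/-- The stabilizer of `z ∈ ℂ^n` in `T^k`. -/
def stab {d n : ℕ} (A : Matrix (Fin d) (Fin n) ℤ) (z : Fin n → ℂ) : Set (Fin n → ℂˣ) :=
  {t | t ∈ Tk A ∧ ∀ i, (t i : ℂ) * z i = z i}


lemma muMap_apply {d n : ℕ} (A : Matrix (Fin d) (Fin n) ℤ) (p : (Fin n → ℂ) × (Fin n → ℂ))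
    (x : tkLie A) : muMap A p x = ∑ i, p.1 i * p.2 i * (x : Fin n → ℂ) i := by
  simp [muMap, muL, LinearMap.sum_apply]

/-- Infinitesimal freeness at `z`. -/
def InfFree {d n : ℕ} (A : Matrix (Fin d) (Fin n) ℤ) (z : Fin n → ℂ) : Prop :=
  ∀ x ∈ tkLie A, (∀ i, z i * x i = 0) → x = 0

lemma differentiable_aux {V : Type*} [NormedAddCommGroup V] [NormedSpace ℂ V] {n : ℕ}
    (c : Fin n → V →L[ℂ] ℂ) :
    Differentiable ℂ (fun p : (Fin n → ℂ) × (Fin n → ℂ) => ∑ i, (p.1 i * p.2 i) • c i) := by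
  fun_prop

lemma differentiable_muMap {d n : ℕ} (A : Matrix (Fin d) (Fin n) ℤ) :
    Differentiable ℂ (muMap A) := by
  have h : muMap A = fun p => ∑ i : Fin n, (p.1 i * p.2 i) •
      LinearMap.toContinuousLinearMap
        ((LinearMap.proj (R := ℂ) (φ := fun _ : Fin n => ℂ) i).comp (tkLie A).subtype) := by
    funext p
    ext x
    rw [muMap_apply]
    simp [ContinuousLinearMap.sum_apply]
  rw [h]
  exact differentiable_aux _

lemma fderiv_muMap_apply {d n : ℕ} (A : Matrix (Fin d) (Fin n) ℤ)
    (p q : (Fin n → ℂ) × (Fin n → ℂ)) (x : tkLie A) :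
    fderiv ℂ (muMap A) p q x =
      ∑ i, (p.1 i * q.2 i + q.1 i * p.2 i) * (x : Fin n → ℂ) i := by
  have h0 : HasFDerivAt (muMap A) (fderiv ℂ (muMap A) p) p :=
    (differentiable_muMap A p).hasFDerivAt
  have h1 : HasFDerivAt (fun p => muMap A p x)
      ((ContinuousLinearMap.apply ℂ ℂ x).comp (fderiv ℂ (muMap A) p)) p :=
    HasFDerivAt.comp (g := fun φ : tkLie A →L[ℂ] ℂ => φ x) p
      ((ContinuousLinearMap.apply ℂ ℂ x).hasFDerivAt) h0
  have h1' := h1.comp_hasDerivAt_of_eq (0 : ℂ) (f := fun s : ℂ => p + s • q)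
    (f' := q) (by simpa using ((hasDerivAt_id (0 : ℂ)).smul_const q).const_add p) (by simp)
  have h2 : HasDerivAt (fun s : ℂ => ∑ i, (p.1 i + s * q.1 i) * (p.2 i + s * q.2 i) *
      (x : Fin n → ℂ) i)
      (∑ i, (p.1 i * q.2 i + q.1 i * p.2 i) * (x : Fin n → ℂ) i) 0 := by
    refine HasDerivAt.fun_sum fun i _ => ?_
    have ha : ∀ a b : ℂ, HasDerivAt (fun s : ℂ => a + s * b) b 0 := fun a b => by
      simpa using ((hasDerivAt_id (0 : ℂ)).mul_const b).const_add a
    have := ((ha (p.1 i) (q.1 i)).fun_mul (ha (p.2 i) (q.2 i))).mul_const ((x : Fin n → ℂ) i)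
    refine this.congr_deriv ?_
    ring
  have h3 := h1'.unique (h2.congr_of_eventuallyEq (Filter.Eventually.of_forall fun s => by
    simp [muMap_apply]))
  simpa using h3

lemma infFree_of_mem {d n : ℕ} (A : Matrix (Fin d) (Fin n) ℤ)
    (lam : tkLie A →L[ℂ] ℂ) (hreg : IsRegularValue A lam) (z w : Fin n → ℂ)
    (h : muMap A (z, w) = lam) : InfFree A z := by
  intro x hx hzx
  classical
  let w' : Fin n → ℂ := fun i => if z i = 0 then 0 else w i
  have hw' : muMap A (z, w') = lam := by
    rw [← h]
    ext y
    rw [muMap_apply, muMap_apply]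
    refine Finset.sum_congr rfl fun i _ => ?_
    by_cases hz : z i = 0 <;> simp [w', hz]
  have hs := hreg _ hw'
  by_contra hx0
  have hx0' : (⟨x, hx⟩ : tkLie A) ≠ 0 := fun h0 => hx0 (congrArg Subtype.val h0)
  obtain ⟨φ, hφ⟩ : ∃ φ : Module.Dual ℂ (tkLie A), φ ⟨x, hx⟩ ≠ 0 := by
    by_contra! hc
    exact hx0' ((Module.forall_dual_apply_eq_zero_iff ℂ _).1 hc)
  obtain ⟨q, hq⟩ := hs (LinearMap.toContinuousLinearMap φ)
  apply hφ
  have : fderiv ℂ (muMap A) (z, w') q ⟨x, hx⟩ = φ ⟨x, hx⟩ := by rw [hq]; rfl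
  rw [← this, fderiv_muMap_apply]
  refine Finset.sum_eq_zero fun i _ => ?_
  have := hzx i
  by_cases hz : z i = 0
  · simp [w', hz]
  · have : x i = 0 := by simpa [hz] using this
    simp [this]

/-- `μ(z, ·)` as a linear map. -/
def Lz {d n : ℕ} (A : Matrix (Fin d) (Fin n) ℤ) (z : Fin n → ℂ) :
    (Fin n → ℂ) →ₗ[ℂ] (tkLie A →L[ℂ] ℂ) where
  toFun w := muMap A (z, w)
  map_add' w v := by
    ext x
    simp only [ContinuousLinearMap.add_apply, muMap_apply, ← Finset.sum_add_distrib]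
    refine Finset.sum_congr rfl fun i _ => ?_
    simp only [Pi.add_apply]
    ring
  map_smul' c w := by
    ext x
    simp only [ContinuousLinearMap.smul_apply, muMap_apply, Finset.smul_sum, RingHom.id_apply]
    refine Finset.sum_congr rfl fun i _ => ?_
    simp only [Pi.smul_apply, smul_eq_mul]
    ring

lemma Lz_surjective {d n : ℕ} (A : Matrix (Fin d) (Fin n) ℤ) (z : Fin n → ℂ)
    (h : InfFree A z) : Function.Surjective (Lz A z) := by
  intro φ
  let D : tkLie A →ₗ[ℂ] (Fin n → ℂ) := (LinearMap.mulLeft ℂ z).comp (tkLie A).subtype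
  have hD : LinearMap.ker D = ⊥ := by
    rw [LinearMap.ker_eq_bot']
    rintro ⟨x, hx⟩ hx0
    exact Subtype.ext (h x hx fun i => congrFun hx0 i)
  obtain ⟨g, hg⟩ := D.exists_leftInverse_of_injective hD
  refine ⟨fun i => φ (g (Pi.single i 1)), ?_⟩
  ext x
  change muMap A _ x = _
  have h1 : g (D x) = x := LinearMap.congr_fun hg x
  have h2 : φ (g (D x)) = ∑ i, (D x i) * φ (g (Pi.single i 1)) := by
    conv_lhs => rw [pi_eq_sum_univ' (D x)]
    simp only [map_sum, map_smul, smul_eq_mul]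
  rw [muMap_apply, ← h1, h2, h1]
  refine Finset.sum_congr rfl fun i _ => ?_
  simp only [D, LinearMap.comp_apply, LinearMap.mulLeft_apply, Pi.mul_apply,
    Submodule.subtype_apply]
  ring

lemma finrank_tkLie {d n : ℕ} (A : Matrix (Fin d) (Fin n) ℤ)
    (hrank : (A.map (Int.cast : ℤ → ℚ)).rank = d) :
    d + Module.finrank ℂ (tkLie A) = n := by
  classical
  have hs : Function.Surjective (A.map (Int.cast : ℤ → ℚ)).mulVec := by
    have : LinearMap.range (A.map (Int.cast : ℤ → ℚ)).mulVecLin = ⊤ := by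
      apply Submodule.eq_top_of_finrank_eq
      rw [← Matrix.rank, hrank]; simp
    exact LinearMap.range_eq_top.1 this
  obtain ⟨B, hB⟩ := Matrix.mulVec_surjective_iff_exists_right_inverse.1 hs
  have hC : (A.map (Int.cast : ℤ → ℂ)) * (B.map (algebraMap ℚ ℂ)) = 1 := by
    have := congrArg (fun M => M.map (algebraMap ℚ ℂ)) hB
    simp only [Matrix.map_mul, Matrix.map_map] at this
    rw [Matrix.map_one _ (map_zero _) (map_one _)] at this
    rw [← this]
    congr 1
  have hsC : Function.Surjective (A.map (Int.cast : ℤ → ℂ)).mulVec :=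
    Matrix.mulVec_surjective_iff_exists_right_inverse.2 ⟨_, hC⟩
  have hr := LinearMap.finrank_range_add_finrank_ker (A.map (Int.cast : ℤ → ℂ)).mulVecLin
  rw [LinearMap.range_eq_top.2 hsC] at hr
  rw [finrank_top, Module.finrank_fin_fun, Module.finrank_fin_fun] at hr
  exact hr

lemma infFree_of_finite {d n : ℕ} (A : Matrix (Fin d) (Fin n) ℤ) (z : Fin n → ℂ)
    (h : (stab A z).Finite) : InfFree A z := by
  intro x hx hzx
  by_contra hx0
  obtain ⟨i₀, hi₀⟩ : ∃ i, x i ≠ 0 := by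
    by_contra! hc
    exact hx0 (funext hc)
  let e : ℂ → Fin n → ℂˣ := fun c i => Units.mk0 (Complex.exp (c * x i)) (Complex.exp_ne_zero _)
  have he : ∀ c, e c ∈ stab A z := by
    intro c
    refine ⟨fun j => ?_, fun i => ?_⟩
    · ext
      simp only [e, Units.coe_prod, Units.val_zpow_eq_zpow_val, Units.val_mk0, Units.val_one,
        ← Complex.exp_int_mul, ← Complex.exp_sum]
      have hj : ∑ i, (A j i : ℂ) * x i = 0 := by
        have := congrFun (LinearMap.mem_ker.1 hx) j
        simpa [Matrix.mulVec, dotProduct] using this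
      have : ∑ i, (A j i : ℂ) * (c * x i) = c * ∑ i, (A j i : ℂ) * x i := by
        rw [Finset.mul_sum]
        exact Finset.sum_congr rfl fun i _ => by ring
      rw [this, hj, mul_zero, Complex.exp_zero]
    · rcases mul_eq_zero.1 (hzx i) with h0 | h0 <;> simp [e, h0]
  have hinf : ({0}ᶜ : Set ℂ).Infinite := (Set.finite_singleton (0 : ℂ)).infinite_compl
  apply hinf
  refine (h.image (fun t => ((t i₀ : ℂˣ) : ℂ))).subset ?_
  intro y hy
  refine ⟨e (Complex.log y / x i₀), he _, ?_⟩
  simp only [e, Units.val_mk0]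
  rw [div_mul_cancel₀ _ hi₀, Complex.exp_log hy]

lemma finite_of_infFree {d n : ℕ} (A : Matrix (Fin d) (Fin n) ℤ) (z : Fin n → ℂ)
    (h : InfFree A z) : (stab A z).Finite := by
  classical
  -- the rational map x ↦ (A x, x off the zero set of z) is injective
  let M : (Fin n → ℚ) →ₗ[ℚ] (Fin d → ℚ) × (Fin n → ℚ) :=
    (A.map (Int.cast : ℤ → ℚ)).mulVecLin.prod
      (LinearMap.mulLeft ℚ (fun i => if z i = 0 then (0 : ℚ) else 1))
  have hM : LinearMap.ker M = ⊥ := by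
    rw [LinearMap.ker_eq_bot']
    intro x hx
    have h1 : (A.map (Int.cast : ℤ → ℚ)).mulVec x = 0 := congrArg Prod.fst hx
    have h2 : ∀ i, (if z i = 0 then (0 : ℚ) else 1) * x i = 0 := fun i =>
      congrFun (congrArg Prod.snd hx) i
    have h3 := h (fun i => (x i : ℂ)) (by
      rw [tkLie, LinearMap.mem_ker]
      funext j
      have := congrArg (Rat.cast : ℚ → ℂ) (congrFun h1 j)
      simpa [Matrix.mulVec, dotProduct] using this) (fun i => by
        have := h2 i
        by_cases hz : z i = 0 <;> simp_all)
    funext i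
    simpa using congrFun h3 i
  obtain ⟨g, hg⟩ := M.exists_leftInverse_of_injective hM
  obtain ⟨N, hN⟩ := IsLocalization.exist_integer_multiples_of_finite (nonZeroDivisors ℤ)
    (fun p : Fin d × Fin n => g (Pi.single p.1 1, 0) p.2)
  choose b hb using hN
  have hN0 : (N : ℤ) ≠ 0 := nonZeroDivisors.ne_zero N.2
  have key : ∀ i i', z i' = 0 → ∑ j, b (j, i) * A j i' = if i' = i then (N : ℤ) else 0 := by
    intro i i' hz
    have h1 := congrFun (LinearMap.congr_fun hg (Pi.single i' 1)) i
    have h2 : M (Pi.single i' 1) = ∑ j, (A j i' : ℚ) • ((Pi.single j 1, 0) :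
        (Fin d → ℚ) × (Fin n → ℚ)) := by
      refine Prod.ext ?_ ?_
      · rw [Prod.fst_sum]
        funext j
        simp [M, Matrix.mulVec, dotProduct, Finset.sum_apply, Pi.single_apply]
      · rw [Prod.snd_sum]
        funext k
        by_cases hk : k = i'
        · subst hk; simp [M, hz]
        · simp [M, hk]
    rw [LinearMap.comp_apply, h2] at h1
    simp only [map_sum, map_smul, Finset.sum_apply, Pi.smul_apply, smul_eq_mul,
      LinearMap.id_apply] at h1
    have h3 : ∀ j, ((b (j, i) : ℤ) : ℚ) = (N : ℤ) * g (Pi.single j 1, 0) i := fun j => by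
      simpa using hb (j, i)
    have h4 : ((∑ j, b (j, i) * A j i' : ℤ) : ℚ) =
        (N : ℤ) * (Pi.single i' (1 : ℚ) : Fin n → ℚ) i := by
      rw [← h1, Finset.mul_sum]
      push_cast
      refine Finset.sum_congr rfl fun j _ => ?_
      rw [h3]; ring
    by_cases hi : i' = i
    · subst hi
      simp only [Pi.single_eq_same, mul_one] at h4
      simpa using (by exact_mod_cast h4 : ∑ j, b (j, i') * A j i' = (N : ℤ))
    · rw [Pi.single_eq_of_ne (Ne.symm hi), mul_zero] at h4
      rw [if_neg hi]
      exact_mod_cast h4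
  have hroot : ∀ t ∈ stab A z, ∀ i, (t i) ^ (N : ℤ) = 1 := by
    rintro t ⟨ht, hz⟩ i
    have ht1 : ∀ i, z i ≠ 0 → t i = 1 := fun i hi => by
      ext
      exact mul_right_cancel₀ hi (by simpa using hz i)
    by_cases hi : z i = 0
    swap
    · simp [ht1 i hi]
    have e1 : ∏ j, (∏ i', (t i') ^ (A j i')) ^ (b (j, i)) = 1 :=
      Finset.prod_eq_one fun j _ => by rw [ht j, one_zpow]
    have e2 : ∏ j, (∏ i', (t i') ^ (A j i')) ^ (b (j, i)) =
        ∏ i', (t i') ^ (∑ j, b (j, i) * A j i') := by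
      simp_rw [← Finset.prod_zpow, ← zpow_mul]
      rw [Finset.prod_comm]
      refine Finset.prod_congr rfl fun i' _ => ?_
      have hsum : ∀ (s : Finset (Fin d)) (f : Fin d → ℤ),
          ∏ j ∈ s, (t i') ^ f j = (t i') ^ (∑ j ∈ s, f j) := by
        intro s f
        induction s using Finset.induction_on with
        | empty => simp
        | insert a s ha ih => rw [Finset.prod_insert ha, Finset.sum_insert ha, ih, zpow_add]
      rw [hsum]
      simp_rw [mul_comm]
    have e3 : ∏ i', (t i') ^ (∑ j, b (j, i) * A j i') = (t i) ^ (N : ℤ) := by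
      rw [Finset.prod_eq_single i]
      · rw [key i i hi, if_pos rfl]
      · intro i' _ hne
        by_cases hz' : z i' = 0
        · rw [key i i' hz', if_neg hne, zpow_zero]
        · rw [ht1 i' hz', one_zpow]
      · simp
    rw [← e3, ← e2, e1]
  have hfin : {u : ℂˣ | u ^ (N : ℤ) = 1}.Finite := by
    have hpos : 0 < (N : ℤ).natAbs := Int.natAbs_pos.2 hN0
    have : NeZero (N : ℤ).natAbs := ⟨hpos.ne'⟩
    have hf : ((rootsOfUnity (N : ℤ).natAbs ℂ : Subgroup ℂˣ) : Set ℂˣ).Finite :=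
      Set.finite_coe_iff.1 (inferInstanceAs (Finite (rootsOfUnity (N : ℤ).natAbs ℂ)))
    refine hf.subset fun u hu => ?_
    rw [SetLike.mem_coe, mem_rootsOfUnity]
    exact pow_natAbs_eq_one.2 hu
  exact (Set.Finite.pi' (fun _ : Fin n => hfin)).subset fun t ht i => hroot t ht i

/-- If `λ` is a regular value of `μ`, then the image of the projection
`π_λ : μ⁻¹(λ) → ℂ^n`, `(z,w) ↦ z`, is exactly the locally free locus `(ℂ^n)^{lf}` of points
with finite `T^k`-stabilizer, and all fibers of `π_λ` are `d`-dimensional affine subspaces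
of `ℂ^n` (cosets of linear subspaces). -/
theorem stmt1 {d n : ℕ} (hd : 0 < d) (hn : 0 < n) (hdn : d ≤ n) (k : ℕ) (hk : k = n - d)
    (A : Matrix (Fin d) (Fin n) ℤ)
    (hcols : ∀ i : Fin n, (fun j => A j i) ≠ (0 : Fin d → ℤ))
    (hrank : (A.map (Int.cast : ℤ → ℚ)).rank = d)
    (lam : tkLie A →L[ℂ] ℂ) (hreg : IsRegularValue A lam) :
    {z : Fin n → ℂ | ∃ w : Fin n → ℂ, muMap A (z, w) = lam} = {z | (stab A z).Finite} ∧
    ∀ z : Fin n → ℂ, (∃ w : Fin n → ℂ, muMap A (z, w) = lam) →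
      ∃ (w₀ : Fin n → ℂ) (W : Submodule ℂ (Fin n → ℂ)), Module.finrank ℂ W = d ∧
        {w : Fin n → ℂ | muMap A (z, w) = lam} = (fun v => w₀ + v) '' (W : Set (Fin n → ℂ)) := by
  refine ⟨?_, ?_⟩
  · ext z
    constructor
    · rintro ⟨w, hw⟩
      exact finite_of_infFree A z (infFree_of_mem A lam hreg z w hw)
    · intro hz
      exact Lz_surjective A z (infFree_of_finite A z hz) lam
  · rintro z ⟨w, hw⟩
    have hs := Lz_surjective A z (infFree_of_mem A lam hreg z w hw)
    refine ⟨w, LinearMap.ker (Lz A z), ?_, ?_⟩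
    · have h1 := LinearMap.finrank_range_add_finrank_ker (K := ℂ) (V := Fin n → ℂ)
        (V₂ := tkLie A →L[ℂ] ℂ) (Lz A z)
      have h2 := finrank_tkLie A hrank
      have h3 : Module.finrank ℂ (tkLie A →L[ℂ] ℂ) = Module.finrank ℂ (tkLie A) := by
        rw [← (LinearMap.toContinuousLinearMap (𝕜 := ℂ) (E := tkLie A) (F' := ℂ)).finrank_eq]
        exact Subspace.dual_finrank_eq
      rw [LinearMap.range_eq_top.2 hs, finrank_top, h3, Module.finrank_fin_fun] at h1
      omega
    · ext v
      constructor
      · intro hv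
        refine ⟨v - w, ?_, by simp⟩
        have : Lz A z v = Lz A z w := Eq.trans hv hw.symm
        rw [SetLike.mem_coe, LinearMap.mem_ker, map_sub, this, sub_self]
      · rintro ⟨u, hu, rfl⟩
        have h1 : Lz A z (w + u) = Lz A z w := by
          rw [map_add, LinearMap.mem_ker.1 hu, add_zero]
        exact Eq.trans h1 hw
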